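/- For any program Ω with weight constraints, the nondisjunctive translation [Ω]^{nd} is strongly equivalent to the translation [Ω]. -/

import Mathlib

open Classical

/-- A literal: a propositional atom `a` or its classical negation `¬ a`. -/
inductive Lit (α : Type) where
  | pos : α → Lit α
  | neg : α → Lit α

/-- The atom of a literal. -/
def Lit.atom {α : Type} : Lit α → α
  | .pos a => a
  | .neg a => a

/-- Mapping literals along a map of atoms. -/
def Lit.map {α β : Type} (f : α → β) : Lit α → Lit β
  | .pos a => .pos (f a)
  | .neg a => .neg (f a)

/-- A set of literals is consistent if it contains no pair `a`, `¬ a`. -/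
def LitConsistent {α : Type} (Z : Set (Lit α)) : Prop :=
  ∀ a : α, ¬(Lit.pos a ∈ Z ∧ Lit.neg a ∈ Z)

/-- Formulas (nested expressions): elementary formulas are literals, `⊥` and `⊤`;
formulas are built from them using negation as failure `naf`, conjunction `conj`
and disjunction `disj`. -/
inductive Formula (α : Type) where
  | lit : Lit α → Formula α
  | fbot : Formula α
  | ftop : Formula α
  | naf : Formula α → Formula α
  | conj : Formula α → Formula α → Formula α
  | disj : Formula α → Formula α → Formula α

/-- Satisfaction of a formula by a set of literals. -/
def Formula.sat {α : Type} (Z : Set (Lit α)) : Formula α → Prop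
  | .lit l => l ∈ Z
  | .fbot => False
  | .ftop => True
  | .naf F => ¬ F.sat Z
  | .conj F G => F.sat Z ∧ G.sat Z
  | .disj F G => F.sat Z ∨ G.sat Z

/-- A rule with nested expressions: `head ← body`. -/
structure NRule (α : Type) where
  head : Formula α
  body : Formula α

/-- `Z` satisfies a program (a set of rules). -/
def progSat {α : Type} (Z : Set (Lit α)) (P : Set (NRule α)) : Prop :=
  ∀ r ∈ P, r.body.sat Z → r.head.sat Z

/-- The reduct `F^Z` of a formula relative to a set of literals `Z`. -/
noncomputable def Formula.reduct {α : Type} (Z : Set (Lit α)) : Formula α → Formula α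
  | .lit l => .lit l
  | .fbot => .fbot
  | .ftop => .ftop
  | .naf F => if F.sat Z then .fbot else .ftop
  | .conj F G => .conj (F.reduct Z) (G.reduct Z)
  | .disj F G => .disj (F.reduct Z) (G.reduct Z)

/-- The reduct `Π^Z` of a program. -/
noncomputable def progReduct {α : Type} (Z : Set (Lit α)) (P : Set (NRule α)) : Set (NRule α) :=
  (fun r : NRule α => NRule.mk (r.head.reduct Z) (r.body.reduct Z)) '' P

/-- `Z` is minimal (under inclusion) among the consistent sets of literals satisfying `P`. -/
def MinimalSat {α : Type} (Z : Set (Lit α)) (P : Set (NRule α)) : Prop :=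
  LitConsistent Z ∧ progSat Z P ∧
    ∀ Z' : Set (Lit α), LitConsistent Z' → progSat Z' P → Z' ⊆ Z → Z' = Z

/-- `Z` is an answer set for a program `P` with nested expressions:
`Z` is minimal among the consistent sets satisfying the reduct `P^Z`. -/
def AnswerSet {α : Type} (Z : Set (Lit α)) (P : Set (NRule α)) : Prop :=
  MinimalSat Z (progReduct Z P)

/-- Strong equivalence of programs with nested expressions. -/
def StrongEq {α : Type} (P₁ P₂ : Set (NRule α)) : Prop :=
  ∀ P : Set (NRule α), ∀ Z : Set (Lit α), AnswerSet Z (P₁ ∪ P) ↔ AnswerSet Z (P₂ ∪ P)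

/-- Multiple conjunction (the empty conjunction is `⊤`). -/
def bigConj {α : Type} : List (Formula α) → Formula α
  | [] => .ftop
  | F :: Fs => .conj F (bigConj Fs)

/-- Multiple disjunction (the empty disjunction is `⊥`). -/
def bigDisj {α : Type} : List (Formula α) → Formula α
  | [] => .fbot
  | F :: Fs => .disj F (bigDisj Fs)

/-- `⟨F₁,…,F_n⟩:X`: the disjunction over `I ∈ X` of the conjunctions of the `Fᵢ`, `i ∈ I`. -/
noncomputable def angled {α : Type} {n : ℕ} (F : Fin n → Formula α) (X : Finset (Finset (Fin n))) :
    Formula α :=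
  bigDisj (X.toList.map fun I => bigConj (I.toList.map F))
/-- A rule element: a literal (positive rule element) or a literal
prefixed with negation as failure (negative rule element). -/
inductive RElem (α : Type) where
  | pos : Lit α → RElem α
  | neg : Lit α → RElem α

/-- Satisfaction of a rule element by a set of literals. -/
def RElem.sat {α : Type} (Z : Set (Lit α)) : RElem α → Prop
  | .pos l => l ∈ Z
  | .neg l => l ∉ Z

/-- Whether a rule element is negative. -/
def RElem.isNegB {α : Type} : RElem α → Bool
  | .pos _ => false
  | .neg _ => true

/-- The sum of the weights of the entries of `S` that are satisfied by `Z`. -/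
noncomputable def weightSum {α : Type} (Z : Set (Lit α)) (S : List (RElem α × ℝ)) : ℝ :=
  (S.map fun p => if p.1.sat Z then p.2 else 0).sum

/-- A weight constraint `L ≤ {c₁=w₁,…,c_m=w_m} ≤ U` with nonnegative weights;
`L` and `U` may be `−∞`/`+∞`. -/
structure WConstraint (α : Type) where
  L : EReal
  S : List (RElem α × ℝ)
  U : EReal
  nonneg : ∀ p ∈ S, (0 : ℝ) ≤ p.2

/-- `Z` satisfies the weight constraint `L ≤ S ≤ U`. -/
def WConstraint.sat {α : Type} (Z : Set (Lit α)) (C : WConstraint α) : Prop :=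
  C.L ≤ (weightSum Z C.S : EReal) ∧ (weightSum Z C.S : EReal) ≤ C.U

/-- A rule with weight constraints, `C₀ ← C₁,…,C_n`. -/
structure WRule (α : Type) where
  head : WConstraint α
  body : List (WConstraint α)

/-- `Z` satisfies a program with weight constraints. -/
def wProgSat {α : Type} (Z : Set (Lit α)) (Ω : Set (WRule α)) : Prop :=
  ∀ R ∈ Ω, (∀ C ∈ R.body, C.sat Z) → R.head.sat Z

/-- A weight constraint of the form `L ≤ S` (no upper bound), with nonnegative weights. -/
structure LConstraint (α : Type) where
  L : EReal
  S : List (RElem α × ℝ)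
  nonneg : ∀ p ∈ S, (0 : ℝ) ≤ p.2

/-- Satisfaction of a lower-bound constraint (by an arbitrary set of literals). -/
def LConstraint.sat {α : Type} (Z : Set (Lit α)) (C : LConstraint α) : Prop :=
  C.L ≤ (weightSum Z C.S : EReal)

/-- A Horn rule: a literal as head, lower-bound constraints as body. -/
structure HornRule (α : Type) where
  head : Lit α
  body : List (LConstraint α)

/-- Satisfaction of a set of Horn rules by an arbitrary set of literals. -/
def hornSat {α : Type} (Z : Set (Lit α)) (P : Set (HornRule α)) : Prop :=
  ∀ r ∈ P, (∀ C ∈ r.body, C.sat Z) → r.head ∈ Z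

/-- The deductive closure of a set of Horn rules: its unique minimal satisfying
set of literals (the intersection of all satisfying sets). -/
def cl {α : Type} (P : Set (HornRule α)) : Set (Lit α) :=
  ⋂₀ {Z : Set (Lit α) | hornSat Z P}

/-- The sum of the weights of the negative entries of `S` satisfied by `Z`. -/
noncomputable def negSatWeight {α : Type} (Z : Set (Lit α)) (S : List (RElem α × ℝ)) : ℝ :=
  (S.map fun p => if p.1.isNegB = true ∧ p.1.sat Z then p.2 else 0).sum

/-- The reduct `(L ≤ S)^Z` of a lower-bound constraint: drop the negative entries
of `S` and decrease `L` by the total weight of the negative entries satisfied by `Z`. -/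
noncomputable def LConstraint.reduct {α : Type} (Z : Set (Lit α)) (C : LConstraint α) :
    LConstraint α :=
  ⟨C.L - ((negSatWeight Z C.S : ℝ) : EReal),
   C.S.filter (fun p => !p.1.isNegB),
   fun p hp => C.nonneg p (List.mem_of_mem_filter hp)⟩

/-- The lower-bound part `L ≤ S` of a weight constraint `L ≤ S ≤ U`. -/
def WConstraint.lower {α : Type} (C : WConstraint α) : LConstraint α :=
  ⟨C.L, C.S, C.nonneg⟩

/-- The positive rule elements (as literals) occurring in `S`. -/
def posElems {α : Type} (S : List (RElem α × ℝ)) : Set (Lit α) :=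
  {l : Lit α | ∃ w : ℝ, (RElem.pos l, w) ∈ S}

/-- The reduct `Ω^Z` of a program with weight constraints: for each rule
`L₀≤S₀≤U₀ ← C₁,…,C_n` whose upper bounds are all satisfied by `Z`, the Horn rules
`l ← C₁^Z,…,C_n^Z` for all positive rule elements `l` of `S₀` with `l ∈ Z`. -/
noncomputable def wProgReduct {α : Type} (Z : Set (Lit α)) (Ω : Set (WRule α)) :
    Set (HornRule α) :=
  { r : HornRule α | ∃ R ∈ Ω,
      (∀ C ∈ R.body, (weightSum Z C.S : EReal) ≤ C.U) ∧
      r.head ∈ posElems R.head.S ∧ r.head ∈ Z ∧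
      r.body = R.body.map (fun C => C.lower.reduct Z) }

/-- `Z` is an answer set for the program `Ω` with weight constraints. -/
def WAnswerSet {α : Type} (Z : Set (Lit α)) (Ω : Set (WRule α)) : Prop :=
  LitConsistent Z ∧ wProgSat Z Ω ∧ cl (wProgReduct Z Ω) = Z

/-- Strong equivalence of programs with weight constraints. -/
def WStrongEq {α : Type} (Ω₁ Ω₂ : Set (WRule α)) : Prop :=
  ∀ Ω : Set (WRule α), ∀ Z : Set (Lit α), WAnswerSet Z (Ω₁ ∪ Ω) ↔ WAnswerSet Z (Ω₂ ∪ Ω)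

/-- A rule element as a formula: `l` becomes the literal `l`, `not l` becomes `naf l`. -/
def RElem.toFormula {α : Type} : RElem α → Formula α
  | .pos l => .lit l
  | .neg l => .naf (.lit l)

/-- The translation `[L ≤ S]`: the formula `⟨c₁,…,c_m⟩:{I : L ≤ Σ_{i∈I} wᵢ}`. -/
noncomputable def trLower {α : Type} (L : EReal) (S : List (RElem α × ℝ)) : Formula α :=
  angled (fun i : Fin S.length => (S.get i).1.toFormula)
    (Finset.univ.filter fun I : Finset (Fin S.length) =>
      L ≤ ((∑ i ∈ I, (S.get i).2 : ℝ) : EReal))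

/-- The translation `[S ≤ U]`: the formula `not ⟨c₁,…,c_m⟩:{I : U < Σ_{i∈I} wᵢ}`. -/
noncomputable def trUpper {α : Type} (S : List (RElem α × ℝ)) (U : EReal) : Formula α :=
  .naf (angled (fun i : Fin S.length => (S.get i).1.toFormula)
    (Finset.univ.filter fun I : Finset (Fin S.length) =>
      U < ((∑ i ∈ I, (S.get i).2 : ℝ) : EReal)))

/-- The translation `[L ≤ S ≤ U] = [L ≤ S],[S ≤ U]`. -/
noncomputable def trWC {α : Type} (C : WConstraint α) : Formula α :=
  .conj (trLower C.L C.S) (trUpper C.S C.U)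

/-- The formulas `l ; not l` for the positive rule elements `l` of `S`, in order. -/
def choiceFmls {α : Type} (S : List (RElem α × ℝ)) : List (Formula α) :=
  S.filterMap fun p =>
    match p.1 with
    | RElem.pos l => some (Formula.disj (.lit l) (.naf (.lit l)))
    | RElem.neg _ => none

/-- The translation of a rule with weight constraints `C₀ ← C₁,…,C_n`:
`(l₁; not l₁),…,(l_p; not l_p),[C₀] ← [C₁],…,[C_n]`. -/
noncomputable def trRule {α : Type} (R : WRule α) : NRule α :=
  ⟨bigConj (choiceFmls R.head.S ++ [trWC R.head]), bigConj (R.body.map trWC)⟩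

/-- The translation `[Ω]` of a program with weight constraints. -/
noncomputable def trProg {α : Type} (Ω : Set (WRule α)) : Set (NRule α) :=
  trRule '' Ω

/-- The nondisjunctive translation `[Ω]^{nd}`: each rule `C₀ ← C₁,…,C_n` is replaced
by the rules `l ← not not l, [C₁],…,[C_n]` for all positive rule elements `l` of `C₀`
together with `⊥ ← not [C₀], [C₁],…,[C_n]`. -/
noncomputable def ndTrans {α : Type} (Ω : Set (WRule α)) : Set (NRule α) :=
  { r : NRule α | ∃ R ∈ Ω,
      (∃ l ∈ posElems R.head.S,
        r = ⟨.lit l, bigConj (.naf (.naf (.lit l)) :: R.body.map trWC)⟩) ∨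
      r = ⟨.fbot, bigConj (.naf (trWC R.head) :: R.body.map trWC)⟩ }

theorem aux_conj_sat {α : Type} (Y Z : Set (Lit α)) (Fs : List (Formula α)) :
    ((bigConj Fs).reduct Z).sat Y ↔ ∀ F ∈ Fs, (F.reduct Z).sat Y := by
  induction Fs with
  | nil => simp [bigConj, Formula.reduct, Formula.sat]
  | cons F Fs ih => simp [bigConj, Formula.reduct, Formula.sat, ih]

theorem aux_disj_sat {α : Type} (Y Z : Set (Lit α)) (Fs : List (Formula α)) :
    ((bigDisj Fs).reduct Z).sat Y ↔ ∃ F ∈ Fs, (F.reduct Z).sat Y := by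
  induction Fs with
  | nil => simp [bigDisj, Formula.reduct, Formula.sat]
  | cons F Fs ih => simp [bigDisj, Formula.reduct, Formula.sat, ih]

theorem aux_naf_sat {α : Type} (Y Z : Set (Lit α)) (F : Formula α) :
    ((Formula.naf F).reduct Z).sat Y ↔ ¬ F.sat Z := by
  by_cases h : F.sat Z <;> simp [Formula.reduct, Formula.sat, h]

theorem aux_reduct_self {α : Type} (Z : Set (Lit α)) (F : Formula α) :
    (F.reduct Z).sat Z ↔ F.sat Z := by
  induction F with
  | naf F _ => rw [aux_naf_sat]; rfl
  | conj F G ihF ihG => simp [Formula.reduct, Formula.sat, ihF, ihG]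
  | disj F G ihF ihG => simp [Formula.reduct, Formula.sat, ihF, ihG]
  | _ => rfl

theorem aux_angled_sat {α : Type} (Y Z : Set (Lit α)) {n : ℕ} (F : Fin n → Formula α)
    (X : Finset (Finset (Fin n))) :
    ((angled F X).reduct Z).sat Y ↔ ∃ I ∈ X, ∀ i ∈ I, ((F i).reduct Z).sat Y := by
  simp [angled, aux_disj_sat, aux_conj_sat]

/-- If `Y` and `Z` agree on the positive elements of `C`, the reduct of `[C]` is satisfied
by `Y` iff `[C]` is satisfied by `Z`. -/
theorem aux_wc_sat {α : Type} (Y Z : Set (Lit α)) (C : WConstraint α)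
    (h : ∀ l ∈ posElems C.S, l ∈ Y ↔ l ∈ Z) :
    ((trWC C).reduct Z).sat Y ↔ (trWC C).sat Z := by
  have key : ∀ i : Fin C.S.length, (((C.S.get i).1.toFormula).reduct Z).sat Y ↔
      (((C.S.get i).1.toFormula).reduct Z).sat Z := by
    intro i
    have hm : C.S.get i ∈ C.S := List.get_mem _ _
    generalize C.S.get i = p at hm
    obtain ⟨e, w⟩ := p
    cases e with
    | pos l => exact h l ⟨w, hm⟩
    | neg l => simp only [RElem.toFormula, aux_naf_sat]
  rw [← aux_reduct_self Z (trWC C)]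
  change (((trLower C.L C.S).reduct Z).sat Y ∧ ((trUpper C.S C.U).reduct Z).sat Y) ↔
    (((trLower C.L C.S).reduct Z).sat Z ∧ ((trUpper C.S C.U).reduct Z).sat Z)
  simp only [trUpper, trLower, aux_naf_sat, aux_angled_sat, key]

theorem aux_choice {α : Type} (Y Z : Set (Lit α)) (S : List (RElem α × ℝ)) :
    (∀ F ∈ choiceFmls S, (F.reduct Z).sat Y) ↔ ∀ l ∈ posElems S, l ∈ Z → l ∈ Y := by
  have e : ∀ l : Lit α, ((Formula.disj (.lit l) (.naf (.lit l))).reduct Z).sat Y ↔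
      (l ∈ Z → l ∈ Y) := by
    intro l
    change (l ∈ Y ∨ ((Formula.naf (.lit l)).reduct Z).sat Y) ↔ _
    rw [aux_naf_sat]
    change (l ∈ Y ∨ ¬ l ∈ Z) ↔ _
    tauto
  constructor
  · rintro h l ⟨w, hw⟩
    rw [← e]
    exact h _ (List.mem_filterMap.2 ⟨_, hw, rfl⟩)
  · intro h F hF
    obtain ⟨⟨c, w⟩, hp, hF⟩ := List.mem_filterMap.1 hF
    cases c with
    | pos l =>
      simp only [Option.some.injEq] at hF
      subst hF
      exact (e l).2 (h l ⟨w, hp⟩)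
    | neg l => simp at hF

theorem aux_reduct_prog {α : Type} (Y Z : Set (Lit α)) (P : Set (NRule α)) :
    progSat Y (progReduct Z P) ↔
      ∀ r ∈ P, (r.body.reduct Z).sat Y → (r.head.reduct Z).sat Y := by
  simp [progSat, progReduct]

theorem aux_main {α : Type} (Y Z : Set (Lit α)) (hYZ : Y ⊆ Z) (Ω : Set (WRule α)) :
    progSat Y (progReduct Z (ndTrans Ω)) ↔ progSat Y (progReduct Z (trProg Ω)) := by
  have nn : ∀ l : Lit α, ((Formula.naf (.naf (.lit l))).reduct Z).sat Y ↔ l ∈ Z := by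
    intro l
    rw [aux_naf_sat]
    exact not_not
  rw [aux_reduct_prog, aux_reduct_prog]
  constructor
  · rintro h _ ⟨R, hR, rfl⟩ hB
    simp only [trRule, aux_conj_sat] at hB ⊢
    have h1 : ∀ l ∈ posElems R.head.S, l ∈ Z → l ∈ Y := by
      intro l hl hlZ
      refine h _ ⟨R, hR, Or.inl ⟨l, hl, rfl⟩⟩ ?_
      rw [aux_conj_sat]
      exact List.forall_mem_cons.2 ⟨(nn l).2 hlZ, hB⟩
    have h2 : (trWC R.head).sat Z := by
      by_contra hc
      refine h _ ⟨R, hR, Or.inr rfl⟩ ?_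
      rw [aux_conj_sat]
      exact List.forall_mem_cons.2 ⟨(aux_naf_sat _ _ _).2 hc, hB⟩
    intro F hF
    rcases List.mem_append.1 hF with hF | hF
    · exact (aux_choice Y Z _).2 h1 F hF
    · rw [List.mem_singleton.1 hF]
      exact (aux_wc_sat Y Z _ fun l hl => ⟨fun x => hYZ x, h1 l hl⟩).2 h2
  · rintro h _ ⟨R, hR, hr⟩
    have h0 : (∀ F ∈ R.body.map trWC, (F.reduct Z).sat Y) →
        (∀ l ∈ posElems R.head.S, l ∈ Z → l ∈ Y) ∧ (trWC R.head).sat Z := by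
      intro hB
      have := h _ ⟨R, hR, rfl⟩ ((aux_conj_sat _ _ _).2 hB)
      simp only [trRule, aux_conj_sat] at this
      have h1 := (aux_choice Y Z R.head.S).1 fun F hF => this F (List.mem_append_left _ hF)
      refine ⟨h1, ?_⟩
      exact (aux_wc_sat Y Z _ fun l hl => ⟨fun x => hYZ x, h1 l hl⟩).1 (this _ (by simp))
    rcases hr with ⟨l, hl, rfl⟩ | rfl
    · intro hb
      rw [aux_conj_sat, List.forall_mem_cons] at hb
      exact (h0 hb.2).1 l hl ((nn l).1 hb.1)
    · intro hb
      rw [aux_conj_sat, List.forall_mem_cons] at hb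
      exact absurd (h0 hb.2).2 ((aux_naf_sat _ _ _).1 hb.1)

theorem aux_union {α : Type} (Y Z : Set (Lit α)) (P Q : Set (NRule α)) :
    progSat Y (progReduct Z (P ∪ Q)) ↔
      progSat Y (progReduct Z P) ∧ progSat Y (progReduct Z Q) := by
  simp only [aux_reduct_prog, Set.mem_union, or_imp, forall_and]

/-- Proposition: for any program `Ω` with weight constraints, the nondisjunctive
translation `[Ω]^{nd}` is strongly equivalent to the translation `[Ω]`. -/
theorem nd_strongly_equivalent (Ω : Set (WRule ℕ)) :
    StrongEq (ndTrans Ω) (trProg Ω) := by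
  intro P Z
  have key : ∀ Y ⊆ Z, (progSat Y (progReduct Z (ndTrans Ω ∪ P)) ↔
      progSat Y (progReduct Z (trProg Ω ∪ P))) := by
    intro Y hY
    rw [aux_union, aux_union, aux_main Y Z hY]
  unfold AnswerSet MinimalSat
  rw [key Z subset_rfl]
  refine and_congr_right fun _ => and_congr_right fun _ => forall_congr' fun Y => ?_
  refine imp_congr_right fun _ => ?_
  constructor
  · intro h hs hY
    exact h ((key Y hY).2 hs) hY
  · intro h hs hY
    exact h ((key Y hY).1 hs) hY
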